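/- Consider the matrix ODE along a curve: for continuous functions f, g : [0,1] → ℂ and a parameter t ∈ ℂ, let X(s,t) ∈ Matrix (Fin 2) (Fin 2) ℂ solve ∂ₛX(s,t) = X(s,t)·[[0, t·f(s)],[g(s), 0]] with X(0,t) = Id, and set τ(t) = (1/2)·trace X(1,t). Define I₀ = ∫₀¹ f(s) ds, I₁ = ∫₀¹ f(s)·(∫₀ˢ g(v) dv) ds, I₂ = ∫₀¹ g(s)·(∫₀ˢ f(u)·(∫₀ᵘ g(v) dv) du) ds. Assume X is twice continuously differentiable jointly in (s,t), det X(s,t) = 1 for all s and t, and ∫₀¹ g(s) ds = 0. Then τ(0) = 1, τ'(0) = 0, and τ''(0) = I₀·I₂ + I₁². -/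

import Mathlib

attribute [local instance] Matrix.normedAddCommGroup Matrix.normedSpace

namespace HalfTrace

/-- primitive from 0 -/
noncomputable def J (h : ℝ → ℂ) (s : ℝ) : ℂ := ∫ u in (0:ℝ)..s, h u

lemma J_zero (h : ℝ → ℂ) : J h 0 = 0 := by simp [J]

lemma J_deriv {h : ℝ → ℂ} (hh : Continuous h) (s : ℝ) : HasDerivAt (J h) (h s) s :=
  intervalIntegral.integral_hasDerivAt_right (hh.intervalIntegrable _ _)
    hh.aestronglyMeasurable.stronglyMeasurableAtFilter hh.continuousAt

lemma J_cont {h : ℝ → ℂ} (hh : Continuous h) : Continuous (J h) :=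
  continuous_iff_continuousAt.2 fun s => (J_deriv hh s).continuousAt

lemma J_cont₂ {h : ℂ → ℝ → ℂ} (hh : Continuous fun p : ℂ × ℝ => h p.1 p.2) :
    Continuous fun p : ℂ × ℝ => J (h p.1) p.2 := by
  unfold J
  apply intervalIntegral.continuous_parametric_intervalIntegral_of_continuous
    (f := fun (p : ℂ × ℝ) u => h p.1 u) (s := fun p : ℂ × ℝ => p.2)
  · exact hh.comp (f := fun q : (ℂ × ℝ) × ℝ => (q.1.1, q.2)) (by fun_prop)
  · fun_prop

lemma J_congr {h k : ℝ → ℂ} (H : ∀ s ∈ Set.Icc (0:ℝ) 1, h s = k s) {s : ℝ}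
    (hs : s ∈ Set.Icc (0:ℝ) 1) : J h s = J k s := by
  unfold J
  apply intervalIntegral.integral_congr
  intro u hu
  rw [Set.uIcc_of_le hs.1] at hu
  exact H u ⟨hu.1, hu.2.trans hs.2⟩

lemma J_add {h k : ℝ → ℂ} (hh : Continuous h) (hk : Continuous k) (s : ℝ) :
    J (fun u => h u + k u) s = J h s + J k s :=
  intervalIntegral.integral_add (hh.intervalIntegrable _ _) (hk.intervalIntegrable _ _)

lemma J_smul (c : ℂ) (h : ℝ → ℂ) (s : ℝ) : J (fun u => c * h u) s = c * J h s :=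
  intervalIntegral.integral_const_mul _ _

lemma ftc {u u' : ℝ → ℂ} (hu' : Continuous u')
    (H : ∀ s ∈ Set.Icc (0:ℝ) 1, HasDerivWithinAt u (u' s) (Set.Icc 0 1) s) {s : ℝ}
    (hs : s ∈ Set.Icc (0:ℝ) 1) : u s = u 0 + J u' s := by
  have := intervalIntegral.integral_eq_sub_of_hasDerivAt_of_le (f := u) (f' := u') hs.1
    (fun x hx => ((H x ⟨hx.1, hx.2.trans hs.2⟩).continuousWithinAt).mono
      (Set.Icc_subset_Icc_right hs.2))
    (fun x hx => (H x ⟨hx.1.le, hx.2.le.trans hs.2⟩).hasDerivAt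
      (Icc_mem_nhds hx.1 (hx.2.trans_le hs.2))) (hu'.intervalIntegrable _ _)
  unfold J
  rw [this]; ring

lemma J_mul {h k : ℝ → ℂ} (hh : Continuous h) (hk : Continuous k) (s : ℝ) :
    J h s * J k s = J (fun u => h u * J k u) s + J (fun u => k u * J h u) s := by
  have c1 := J_cont hh
  have c2 := J_cont hk
  have H : ∀ x, HasDerivAt (fun s => J h s * J k s) (h x * J k x + k x * J h x) x := by
    intro x
    exact ((J_deriv hh x).mul (J_deriv hk x)).congr_deriv (by ring)
  rw [← J_add (by fun_prop) (by fun_prop)]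
  have := intervalIntegral.integral_eq_sub_of_hasDerivAt (a := 0) (b := s) (fun x _ => H x)
    (Continuous.intervalIntegrable (by fun_prop) _ _)
  simp only [J_zero, mul_zero, sub_zero] at this
  exact this.symm

lemma shuffle {f g : ℝ → ℂ} (hf : Continuous f) (hg : Continuous g) (h0 : J g 1 = 0) :
    J (fun s => g s * J (fun s => f s * J (fun s => g s * J f s) s) s) 1 +
    J (fun s => f s * J (fun s => g s * J (fun s => f s * J g s) s) s) 1 =
    J f 1 * J (fun s => g s * J (fun s => f s * J g s) s) 1 + (J (fun s => f s * J g s) 1) ^ 2 := by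
  have cF := J_cont hf
  have cG := J_cont hg
  have kfg : Continuous fun s => f s * J g s := by fun_prop
  have kgf : Continuous fun s => g s * J f s := by fun_prop
  have cfg := J_cont kfg
  have cgf := J_cont kgf
  have kffg : Continuous fun s => f s * J (fun s => f s * J g s) s := by fun_prop
  have kgfg : Continuous fun s => g s * J (fun s => f s * J g s) s := by fun_prop
  have kfgf : Continuous fun s => f s * J (fun s => g s * J f s) s := by fun_prop
  have cffg := J_cont kffg
  have cgfg := J_cont kgfg
  have cfgf := J_cont kfgf
  -- f ⧢ g
  have e1 : ∀ s, J f s * J g s = J (fun s => f s * J g s) s + J (fun s => g s * J f s) s :=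
    J_mul hf hg
  -- f ⧢ fg = 2 ffg + fgf
  have e2 : ∀ s, J f s * J (fun s => f s * J g s) s =
      2 * J (fun s => f s * J (fun s => f s * J g s) s) s +
        J (fun s => f s * J (fun s => g s * J f s) s) s := by
    intro s
    rw [J_mul hf kfg]
    have : (fun u => f u * J g u * J f u) = fun u => f u * J (fun s => f s * J g s) u +
        f u * J (fun s => g s * J f s) u := by
      funext u; linear_combination f u * e1 u
    rw [this, J_add kffg kfgf]; ring
  -- f ⧢ gfg
  have e3 : J f 1 * J (fun s => g s * J (fun s => f s * J g s) s) 1 =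
      J (fun s => f s * J (fun s => g s * J (fun s => f s * J g s) s) s) 1 +
      (2 * J (fun s => g s * J (fun s => f s * J (fun s => f s * J g s) s) s) 1 +
      J (fun s => g s * J (fun s => f s * J (fun s => g s * J f s) s) s) 1) := by
    rw [J_mul hf kgfg, ← J_smul]
    congr 1
    rw [← J_add (by fun_prop) (by fun_prop)]
    congr 1
    funext u; linear_combination g u * e2 u
  -- g ⧢ fg = gfg + 2 fgg
  have e4 : ∀ s, J g s * J (fun s => f s * J g s) s =
      J (fun s => g s * J (fun s => f s * J g s) s) s + J (fun s => f s * J g s * J g s) s :=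
    J_mul hg kfg
  have kfgg : Continuous fun s => f s * J g s * J g s := by fun_prop
  have cfgg := J_cont kfgg
  -- g ⧢ ffg
  have e5 : (0:ℂ) = J (fun s => g s * J (fun s => f s * J (fun s => f s * J g s) s) s) 1 +
      (J (fun s => f s * J (fun s => g s * J (fun s => f s * J g s) s) s) 1 +
       J (fun s => f s * J (fun s => f s * J g s * J g s) s) 1) := by
    rw [← J_add (by fun_prop) (by fun_prop)]
    have := J_mul hg kffg 1
    rw [h0, zero_mul] at this
    rw [this]
    congr 2
    funext u; linear_combination f u * e4 u
  -- fg ⧢ fg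
  have e6 : (J (fun s => f s * J g s) 1) ^ 2 =
      2 * (J (fun s => f s * J (fun s => g s * J (fun s => f s * J g s) s) s) 1 +
       J (fun s => f s * J (fun s => f s * J g s * J g s) s) 1) := by
    rw [← J_add (by fun_prop) (by fun_prop), sq, J_mul kfg kfg, ← two_mul]
    congr 2
    funext u; linear_combination f u * e4 u
  linear_combination -e3 - e6 + 2 * e5

lemma taylor {τ R : ℂ → ℂ} (hτ : Differentiable ℂ τ) (hR : Continuous R)
    (h : ∀ t, τ t = 1 + t ^ 2 * R t) :
    τ 0 = 1 ∧ deriv τ 0 = 0 ∧ iteratedDeriv 2 τ 0 = 2 * R 0 := by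
  have hRa : AnalyticAt ℂ R 0 := by
    apply Complex.analyticAt_of_differentiable_on_punctured_nhds_of_continuousAt _ hR.continuousAt
    filter_upwards [self_mem_nhdsWithin] with t ht
    have ht : t ≠ 0 := ht
    have : R =ᶠ[nhds t] fun t => (τ t - 1) / t ^ 2 := by
      filter_upwards [isOpen_ne.mem_nhds ht] with z hz
      have hz : z ≠ 0 := hz
      rw [h z]; field_simp; ring
    rw [this.differentiableAt_iff]
    exact ((hτ t).sub_const 1).div (by fun_prop) (pow_ne_zero _ ht)
  have hd : ∀ᶠ t in nhds (0:ℂ), deriv τ t = t * (2 * R t + t * deriv R t) := by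
    filter_upwards [hRa.eventually_analyticAt] with t ht
    have hτe : τ = fun t => 1 + t ^ 2 * R t := funext h
    have := ((((hasDerivAt_id t).pow 2).mul ht.differentiableAt.hasDerivAt).const_add 1).deriv
    rw [hτe]
    refine Eq.trans this ?_
    simp; ring
  refine ⟨by simp [h 0], by simpa using hd.self_of_nhds, ?_⟩
  rw [iteratedDeriv_succ, iteratedDeriv_one, Filter.EventuallyEq.deriv_eq hd]
  have hK : DifferentiableAt ℂ (fun t => 2 * R t + t * deriv R t) 0 :=
    (hRa.differentiableAt.const_mul 2).add (differentiableAt_id.mul hRa.deriv.differentiableAt)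
  have := ((hasDerivAt_id (0:ℂ)).mul hK.hasDerivAt).deriv
  refine Eq.trans this ?_
  simp

lemma core {f g : ℝ → ℂ} (hf : Continuous f) (hg : Continuous g) (h0 : J g 1 = 0)
    {a b c d : ℂ → ℝ → ℂ}
    (ca : Continuous fun p : ℂ × ℝ => a p.1 p.2)
    (cb : Continuous fun p : ℂ × ℝ => b p.1 p.2)
    (cc : Continuous fun p : ℂ × ℝ => c p.1 p.2)
    (cd : Continuous fun p : ℂ × ℝ => d p.1 p.2)
    (da : ∀ t, ∀ s ∈ Set.Icc (0:ℝ) 1,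
      HasDerivWithinAt (a t) (g s * b t s) (Set.Icc 0 1) s)
    (db : ∀ t, ∀ s ∈ Set.Icc (0:ℝ) 1,
      HasDerivWithinAt (b t) (t * (f s * a t s)) (Set.Icc 0 1) s)
    (dc : ∀ t, ∀ s ∈ Set.Icc (0:ℝ) 1,
      HasDerivWithinAt (c t) (g s * d t s) (Set.Icc 0 1) s)
    (dd : ∀ t, ∀ s ∈ Set.Icc (0:ℝ) 1,
      HasDerivWithinAt (d t) (t * (f s * c t s)) (Set.Icc 0 1) s)
    (a0 : ∀ t, a t 0 = 1) (b0 : ∀ t, b t 0 = 0) (c0 : ∀ t, c t 0 = 0) (d0 : ∀ t, d t 0 = 1)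
    (hdet : ∀ t, a t 1 * d t 1 - b t 1 * c t 1 = 1)
    (τ : ℂ → ℂ) (hτ : τ = fun t => (1 / 2 : ℂ) * (a t 1 + d t 1)) :
    τ 0 = 1 ∧ deriv τ 0 = 0 ∧ iteratedDeriv 2 τ 0 =
      J f 1 * J (fun s => g s * J (fun s => f s * J g s) s) 1 + (J (fun s => f s * J g s) 1) ^ 2 := by
  have ca' : ∀ t, Continuous (a t) := fun t => ca.comp (f := fun s => (t, s)) (by fun_prop)
  have cb' : ∀ t, Continuous (b t) := fun t => cb.comp (f := fun s => (t, s)) (by fun_prop)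
  have cc' : ∀ t, Continuous (c t) := fun t => cc.comp (f := fun s => (t, s)) (by fun_prop)
  have cd' : ∀ t, Continuous (d t) := fun t => cd.comp (f := fun s => (t, s)) (by fun_prop)
  have one : (1:ℝ) ∈ Set.Icc (0:ℝ) 1 := by simp
  -- integral equations
  have ia : ∀ t, ∀ s ∈ Set.Icc (0:ℝ) 1, a t s = 1 + J (fun s => g s * b t s) s := fun t s hs => by
    rw [← a0 t]; exact ftc (hg.mul (cb' t)) (da t) hs
  have ic : ∀ t, ∀ s ∈ Set.Icc (0:ℝ) 1, c t s = J (fun s => g s * d t s) s := fun t s hs => by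
    rw [ftc (u' := fun s => g s * d t s) (hg.mul (cd' t)) (dc t) hs, c0, zero_add]
  have ib : ∀ t, ∀ s ∈ Set.Icc (0:ℝ) 1, b t s = t * J (fun s => f s * a t s) s := fun t s hs => by
    rw [ftc (u' := fun s => t * (f s * a t s)) (continuous_const.mul (hf.mul (ca' t))) (db t) hs, b0, zero_add, J_smul]
  have id' : ∀ t, ∀ s ∈ Set.Icc (0:ℝ) 1, d t s = 1 + t * J (fun s => f s * c t s) s :=
    fun t s hs => by
    rw [ftc (u' := fun s => t * (f s * c t s)) (continuous_const.mul (hf.mul (cc' t))) (dd t) hs, d0, J_smul]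
  -- general two-step expansion
  have exp : ∀ (p q : ℝ → ℂ) (hp : Continuous p) (hq : Continuous q) (t : ℂ) (y : ℝ → ℂ)
      (hy : Continuous y)
      (H : ∀ s ∈ Set.Icc (0:ℝ) 1, y s = 1 + t * J (fun s => p s * J (fun s => q s * y s) s) s),
      y 1 = 1 + t * J (fun s => p s * J q s) 1 + t ^ 2 * J (fun s => p s * J (fun s => q s *
        J (fun s => p s * J (fun s => q s * y s) s) s) s) 1 := by
    intro p q hp hq t y hy H
    have c1 : Continuous (J fun s => q s * y s) := J_cont (hq.mul hy)
    have c2 : Continuous (J fun s => p s * J (fun s => q s * y s) s) := J_cont (hp.mul c1)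
    have c3 : Continuous (J fun s => q s * J (fun s => p s * J (fun s => q s * y s) s) s) :=
      J_cont (hq.mul c2)
    have c4 := J_cont hq
    have h1 : ∀ s ∈ Set.Icc (0:ℝ) 1, J (fun s => q s * y s) s =
        J q s + t * J (fun s => q s * J (fun s => p s * J (fun s => q s * y s) s) s) s := by
      intro s hs
      rw [← J_smul, ← J_add (by fun_prop) (by fun_prop)]
      refine J_congr (fun u hu => ?_) hs
      rw [H u hu]; ring
    rw [H 1 one]
    have h2 : J (fun s => p s * J (fun s => q s * y s) s) 1 = J (fun s => p s * J q s) 1 +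
        t * J (fun s => p s * J (fun s => q s *
        J (fun s => p s * J (fun s => q s * y s) s) s) s) 1 := by
      rw [← J_smul, ← J_add (by fun_prop) (by fun_prop)]
      refine J_congr (fun u hu => ?_) one
      rw [h1 u hu]; ring
    rw [h2]; ring
  have Ha : ∀ t, ∀ s ∈ Set.Icc (0:ℝ) 1,
      a t s = 1 + t * J (fun s => g s * J (fun s => f s * a t s) s) s := by
    intro t s hs
    rw [ia t s hs, ← J_smul]
    congr 1
    refine J_congr (fun u hu => ?_) hs
    rw [ib t u hu]; ring
  have Hd : ∀ t, ∀ s ∈ Set.Icc (0:ℝ) 1,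
      d t s = 1 + t * J (fun s => f s * J (fun s => g s * d t s) s) s := by
    intro t s hs
    rw [id' t s hs]
    congr 2
    refine J_congr (fun u hu => ?_) hs
    rw [ic t u hu]
  have a00 : ∀ s ∈ Set.Icc (0:ℝ) 1, a 0 s = 1 := fun s hs => by rw [Ha 0 s hs]; simp
  have d00 : ∀ s ∈ Set.Icc (0:ℝ) 1, d 0 s = 1 := fun s hs => by rw [Hd 0 s hs]; simp
  -- continuity of iterated integrals
  have step : ∀ (p : ℝ → ℂ) (_ : Continuous p) (y : ℂ → ℝ → ℂ)
      (_ : Continuous fun z : ℂ × ℝ => y z.1 z.2),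
      Continuous fun z : ℂ × ℝ => J (fun s => p s * y z.1 s) z.2 := fun p hp y hy =>
    J_cont₂ (h := fun t s => p s * y t s) ((hp.comp continuous_snd).mul hy)
  have step4 : ∀ (p q : ℝ → ℂ) (_ : Continuous p) (_ : Continuous q) (y : ℂ → ℝ → ℂ)
      (_ : Continuous fun z : ℂ × ℝ => y z.1 z.2),
      Continuous fun t : ℂ => J (fun s => p s * J (fun s => q s *
        J (fun s => p s * J (fun s => q s * y t s) s) s) s) 1 := fun p q hp hq y hy =>
    (step p hp (fun t s => J (fun s => q s * J (fun s => p s * J (fun s => q s * y t s) s) s) s)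
      (step q hq (fun t s => J (fun s => p s * J (fun s => q s * y t s) s) s)
      (step p hp (fun t s => J (fun s => q s * y t s) s) (step q hq y hy)))).comp (f := fun t : ℂ => (t, (1:ℝ)))
      (by fun_prop)
  have hdiff : Differentiable ℂ τ := by
    intro t
    set K : ℂ → ℂ := fun r => (1/2) * (-a t 1 * J (fun s => f s * (a r s * c t s)) 1
      + c t 1 * J (fun s => f s * (a r s * a t s)) 1 - b t 1 * J (fun s => f s * (c r s * c t s)) 1
      + d t 1 * J (fun s => f s * (c r s * a t s)) 1) with hK
    have cK : Continuous K := by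
      have k : ∀ (y z : ℂ → ℝ → ℂ) (_ : Continuous fun p : ℂ × ℝ => y p.1 p.2)
        (_ : Continuous (z t)), Continuous fun r => J (fun s => f s * (y r s * z t s)) 1 := by
        intro y z hy hz
        exact (step f hf (fun r s => y r s * z t s) (hy.mul (hz.comp continuous_snd))).comp
          (f := fun t : ℂ => (t, (1:ℝ))) (by fun_prop)
      have k1 := k a c ca (cc' t)
      have k2 := k a a ca (ca' t)
      have k3 := k c c cc (cc' t)
      have k4 := k c a cc (ca' t)
      fun_prop
    have key : ∀ r, τ r - τ t = (r - t) * K r := by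
      intro r
      have y11 : a r 1 * d t 1 - b r 1 * c t 1 =
          1 + (t - r) * J (fun s => f s * (a r s * c t s)) 1 := by
        have := ftc (u := fun s => a r s * d t s - b r s * c t s)
          (u' := fun s => (t - r) * (f s * (a r s * c t s)))
          (continuous_const.mul (hf.mul ((ca' r).mul (cc' t))))
          (fun s hs => by
            exact (((da r s hs).mul (dd t s hs)).sub ((db r s hs).mul (dc t s hs))).congr_deriv (by ring)) one
        simpa [J_smul, a0, b0, c0, d0] using this
      have y12 : b r 1 * a t 1 - a r 1 * b t 1 =
          (r - t) * J (fun s => f s * (a r s * a t s)) 1 := by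
        have := ftc (u := fun s => b r s * a t s - a r s * b t s)
          (u' := fun s => (r - t) * (f s * (a r s * a t s)))
          (continuous_const.mul (hf.mul ((ca' r).mul (ca' t))))
          (fun s hs => by
            exact (((db r s hs).mul (da t s hs)).sub ((da r s hs).mul (db t s hs))).congr_deriv (by ring)) one
        simpa [J_smul, a0, b0, c0, d0] using this
      have y21 : c r 1 * d t 1 - d r 1 * c t 1 =
          (t - r) * J (fun s => f s * (c r s * c t s)) 1 := by
        have := ftc (u := fun s => c r s * d t s - d r s * c t s)
          (u' := fun s => (t - r) * (f s * (c r s * c t s)))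
          (continuous_const.mul (hf.mul ((cc' r).mul (cc' t))))
          (fun s hs => by
            exact (((dc r s hs).mul (dd t s hs)).sub ((dd r s hs).mul (dc t s hs))).congr_deriv (by ring)) one
        simpa [J_smul, a0, b0, c0, d0] using this
      have y22 : d r 1 * a t 1 - c r 1 * b t 1 =
          1 + (r - t) * J (fun s => f s * (c r s * a t s)) 1 := by
        have := ftc (u := fun s => d r s * a t s - c r s * b t s)
          (u' := fun s => (r - t) * (f s * (c r s * a t s)))
          (continuous_const.mul (hf.mul ((cc' r).mul (ca' t))))
          (fun s hs => by
            exact (((dd r s hs).mul (da t s hs)).sub ((dc r s hs).mul (db t s hs))).congr_deriv (by ring)) one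
        simpa [J_smul, a0, b0, c0, d0] using this
      rw [hτ, hK]
      linear_combination (1/2) * (a t 1 * y11 + c t 1 * y12 + b t 1 * y21 + d t 1 * y22)
        - (1/2) * (a r 1 + d r 1) * hdet t
    refine HasDerivAt.differentiableAt (f' := K t) ?_
    rw [hasDerivAt_iff_tendsto_slope]
    refine ((cK.tendsto t).mono_left nhdsWithin_le_nhds).congr' ?_
    filter_upwards [self_mem_nhdsWithin] with r hr
    have : r - t ≠ 0 := sub_ne_zero.2 hr
    rw [slope_def_field, key r]; field_simp
  obtain ⟨h1, h2, h3⟩ := taylor (τ := τ) (R := fun t => (1/2) *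
    (J (fun s => g s * J (fun s => f s * J (fun s => g s * J (fun s => f s * a t s) s) s) s) 1
    + J (fun s => f s * J (fun s => g s * J (fun s => f s * J (fun s => g s * d t s) s) s) s) 1))
    hdiff (continuous_const.mul ((step4 g f hg hf a ca).add (step4 f g hf hg d cd))) (by
      intro t
      have E1 := exp g f hg hf t (a t) (ca' t) (Ha t)
      have E2 := exp f g hf hg t (d t) (cd' t) (Hd t)
      have E3 := J_mul hf hg 1
      rw [h0] at E3
      rw [hτ]
      linear_combination (1/2) * E1 + (1/2) * E2 - t / 2 * E3)
  refine ⟨h1, h2, ?_⟩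
  rw [h3, ← shuffle hf hg h0]
  have r4 : ∀ (p q y : ℝ → ℂ) (_ : ∀ s ∈ Set.Icc (0:ℝ) 1, y s = 1),
      J (fun s => p s * J (fun s => q s * J (fun s => p s * J (fun s => q s * y s) s) s) s) 1 =
      J (fun s => p s * J (fun s => q s * J (fun s => p s * J q s) s) s) 1 := by
    intro p q y hy
    refine J_congr (fun u hu => congrArg _ ?_) one
    refine J_congr (fun u hu => congrArg _ ?_) hu
    refine J_congr (fun u hu => congrArg _ ?_) hu
    refine J_congr (fun u hu => ?_) hu
    rw [hy u hu, mul_one]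
  simp only [r4 g f (a 0) a00, r4 f g (d 0) d00]
  ring

end HalfTrace

open HalfTrace in
/-- The first two `t`-derivatives of the half-trace `τ(t) = (1/2)·tr X(1,t)` of the
monodromy at `t = 0`:  `τ(0) = 1`, `τ'(0) = 0` and `τ''(0) = I₀I₂ + I₁²`
(key step in the proof of Lemma 2.5). -/
theorem half_trace_derivatives (f g : ℝ → ℂ)
    (hf : ContinuousOn f (Set.Icc 0 1)) (hg : ContinuousOn g (Set.Icc 0 1))
    (X : ℝ × ℂ → Matrix (Fin 2) (Fin 2) ℂ)
    (hX : ContDiffOn ℝ 2 X (Set.Icc (0:ℝ) 1 ×ˢ Set.univ))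
    (hode : ∀ t : ℂ, ∀ s ∈ Set.Icc (0:ℝ) 1,
      HasDerivWithinAt (fun s' => X (s', t)) (X (s, t) * !![0, t * f s; g s, 0])
        (Set.Icc (0:ℝ) 1) s)
    (hinit : ∀ t : ℂ, X (0, t) = 1)
    (hdet : ∀ t : ℂ, ∀ s ∈ Set.Icc (0:ℝ) 1, (X (s, t)).det = 1)
    (τ : ℂ → ℂ) (hτ : τ = fun t => (1 / 2 : ℂ) * (X (1, t)).trace)
    (hgint : (∫ s in (0:ℝ)..1, g s) = 0)
    (I₀ I₁ I₂ : ℂ)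
    (hI₀ : I₀ = ∫ s in (0:ℝ)..1, f s)
    (hI₁ : I₁ = ∫ s in (0:ℝ)..1, f s * ∫ v in (0:ℝ)..s, g v)
    (hI₂ : I₂ = ∫ s in (0:ℝ)..1, g s * ∫ u in (0:ℝ)..s, f u * ∫ v in (0:ℝ)..u, g v) :
    τ 0 = 1 ∧ deriv τ 0 = 0 ∧ iteratedDeriv 2 τ 0 = I₀ * I₂ + I₁ ^ 2 := by
  have one : (1:ℝ) ∈ Set.Icc (0:ℝ) 1 := by simp
  have zero : (0:ℝ) ∈ Set.Icc (0:ℝ) 1 := by simp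
  -- clamp to the unit interval
  obtain ⟨π, cπ, mπ, eπ⟩ : ∃ π : ℝ → ℝ, Continuous π ∧ (∀ s, π s ∈ Set.Icc (0:ℝ) 1) ∧
      ∀ s ∈ Set.Icc (0:ℝ) 1, π s = s :=
    ⟨fun s => max 0 (min 1 s), by fun_prop, fun s => ⟨le_max_left _ _, by simp⟩,
      fun s hs => by simp [hs.1, hs.2]⟩
  have cF : Continuous (fun s => f (π s)) := hf.comp_continuous cπ mπ
  have cG : Continuous (fun s => g (π s)) := hg.comp_continuous cπ mπ
  have cX : Continuous fun p : ℂ × ℝ => X (π p.2, p.1) :=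
    hX.continuousOn.comp_continuous (by fun_prop) (fun p => ⟨mπ _, trivial⟩)
  have cXij : ∀ i j, Continuous fun p : ℂ × ℝ => X (π p.2, p.1) i j := fun i j =>
    cX.matrix_elem i j
  have dX : ∀ i j t, ∀ s ∈ Set.Icc (0:ℝ) 1, HasDerivWithinAt (fun s => X (π s, t) i j)
      ((X (π s, t) * !![0, t * f (π s); g (π s), 0]) i j) (Set.Icc 0 1) s := by
    intro i j t s hs
    rw [eπ s hs]
    have h1 := hasDerivWithinAt_pi.1 (hode t s hs) i
    have h2 := hasDerivWithinAt_pi.1 h1 j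
    exact h2.congr (fun u hu => by rw [eπ u hu]) (by rw [eπ s hs])
  have jF : ∀ s ∈ Set.Icc (0:ℝ) 1, f (π s) = f s := fun s hs => by rw [eπ s hs]
  have jG : ∀ s ∈ Set.Icc (0:ℝ) 1, g (π s) = g s := fun s hs => by rw [eπ s hs]
  have g0 : J (fun s => g (π s)) 1 = 0 := by rw [J_congr jG one]; exact hgint
  have main := core cF cG g0
    (a := fun t s => X (π s, t) 0 0) (b := fun t s => X (π s, t) 0 1)
    (c := fun t s => X (π s, t) 1 0) (d := fun t s => X (π s, t) 1 1)
    (cXij 0 0) (cXij 0 1) (cXij 1 0) (cXij 1 1)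
    (fun t s hs => by
      convert dX 0 0 t s hs using 1; simp [Matrix.mul_apply, Fin.sum_univ_two]; ring)
    (fun t s hs => by
      convert dX 0 1 t s hs using 1; simp [Matrix.mul_apply, Fin.sum_univ_two]; ring)
    (fun t s hs => by
      convert dX 1 0 t s hs using 1; simp [Matrix.mul_apply, Fin.sum_univ_two]; ring)
    (fun t s hs => by
      convert dX 1 1 t s hs using 1; simp [Matrix.mul_apply, Fin.sum_univ_two]; ring)
    (by simp [eπ 0 zero, hinit]) (by simp [eπ 0 zero, hinit])
    (by simp [eπ 0 zero, hinit]) (by simp [eπ 0 zero, hinit])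
    (fun t => by
      have := hdet t 1 one
      rw [Matrix.det_fin_two] at this
      simpa [eπ 1 one] using this)
    τ (by rw [hτ]; funext t; simp [eπ 1 one, Matrix.trace_fin_two])
  have e0 : J (fun s => f (π s)) 1 = I₀ := by rw [J_congr jF one, hI₀]; rfl
  have e1' : ∀ s ∈ Set.Icc (0:ℝ) 1, J (fun s => f (π s) * J (fun s => g (π s)) s) s =
      J (fun s => f s * J g s) s := fun s hs =>
    J_congr (fun u hu => by rw [jF u hu, J_congr jG hu]) hs
  have e1 : J (fun s => f (π s) * J (fun s => g (π s)) s) 1 = I₁ := by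
    rw [e1' 1 one, hI₁]; rfl
  have e2 : J (fun s => g (π s) * J (fun s => f (π s) * J (fun s => g (π s)) s) s) 1 = I₂ := by
    rw [J_congr (k := fun s => g s * J (fun s => f s * J g s) s)
      (fun u hu => by rw [jG u hu, e1' u hu]) one, hI₂]; rfl
  rw [e0, e1, e2] at main
  exact main
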